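/- arXiv:2002.00946 — 3 statements merged into one kernel-verified Lean document; each statement's English description precedes it below -/
import Mathlib

section
/- For a positive integer m and p_1 = 3/2, p_2 = p_3 = 3: there exists a constant C > 0 such that for all positive integers n_1, n_2, n_3 there is a unimodular trilinear form A : ℓ_{3/2}^{n_1} × ℓ_3^{n_2} × ℓ_3^{n_3} → 𝕂 satisfying ‖A‖ ≤ C · (n_1 + n_2 + n_3)^{1/2} · n_2^{1/6} · n_3^{1/6}. -/
open scoped BigOperators ENNReal

noncomputable section

/-- The `ℓ_p` norm on `𝕂^n`, for `p ∈ [1, ∞]` (sup norm when `p = ∞`). -/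
def lpNorm {𝕂 : Type*} [RCLike 𝕂] (p : ℝ≥0∞) {n : ℕ} (x : Fin n → 𝕂) : ℝ :=
  if p = ∞ then ⨆ j, ‖x j‖ else (∑ j, ‖x j‖ ^ p.toReal) ^ (1 / p.toReal)

/-- The operator norm of an `m`-linear form `A : ℓ_{p 1}^{n 1} × ⋯ × ℓ_{p m}^{n m} → 𝕂`,
i.e. the supremum of `‖A x‖` over all `x` with `‖x k‖_{p k} ≤ 1` for every `k`. -/
def opNorm {𝕂 : Type*} [RCLike 𝕂] {m : ℕ} {n : Fin m → ℕ} (p : Fin m → ℝ≥0∞)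
    (A : MultilinearMap 𝕂 (fun k => Fin (n k) → 𝕂) 𝕂) : ℝ :=
  sSup {t | ∃ x : ∀ k, Fin (n k) → 𝕂, (∀ k, lpNorm (p k) (x k) ≤ 1) ∧ t = ‖A x‖}

/-- A multilinear form is unimodular if all its coefficients `A (e_{j 1}, …, e_{j m})`
have modulus 1. -/
def Unimodular {𝕂 : Type*} [RCLike 𝕂] {m : ℕ} {n : Fin m → ℕ}
    (A : MultilinearMap 𝕂 (fun k => Fin (n k) → 𝕂) 𝕂) : Prop :=
  ∀ j : ∀ k, Fin (n k), ‖A (fun k => Pi.single (j k) 1)‖ = 1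

/-- The `m`-linear form `z ↦ ∑_j c j • z^{(1)}_{j 1} ⋯ z^{(m)}_{j m}` determined by the
coefficients `c`. -/
def coeffForm {𝕂 : Type*} [RCLike 𝕂] {m : ℕ} {n : Fin m → ℕ} (c : (∀ k, Fin (n k)) → 𝕂) :
    MultilinearMap 𝕂 (fun k => Fin (n k) → 𝕂) 𝕂 :=
  ∑ j : ∀ k, Fin (n k), (MultilinearMap.mkPiRing 𝕂 (Fin m) (c j)).compLinearMap
    fun k => LinearMap.proj (j k)

/-- The conjugate exponent `p*` of `p ∈ [1,∞]`, defined by `1/p + 1/p* = 1`. -/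
def conjExp (p : ℝ≥0∞) : ℝ≥0∞ := (1 - 1/p)⁻¹

namespace TriAux

lemma sum_half (K : ℕ) : ∑ k ∈ Finset.Icc (-(K:ℤ)) K, ((1:ℝ)/2) ^ k.natAbs ≤ 3 - 2 * (1/2)^K := by
  induction K with
  | zero => norm_num
  | succ K ih =>
    have : Finset.Icc (-((K+1:ℕ):ℤ)) ((K+1:ℕ):ℤ) =
        insert (-((K+1:ℕ):ℤ)) (insert ((K+1:ℕ):ℤ) (Finset.Icc (-(K:ℤ)) K)) := by
      ext k; simp only [Finset.mem_Icc, Finset.mem_insert]; push_cast; omega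
    rw [this, Finset.sum_insert, Finset.sum_insert]
    · rw [Int.natAbs_neg, Int.natAbs_natCast, pow_succ]
      linarith
    · simp
    · simp only [Finset.mem_Icc, Finset.mem_insert]; push_cast; omega

def net (n : ℕ) : Finset (Fin n → ℤ) :=
  (Fintype.piFinset (fun _ => Finset.Icc (-((36*n : ℕ):ℤ)) ((36*n : ℕ):ℤ))).filter
    (fun k => ∑ i, (k i)^2 ≤ 36 * n)

def base : ℝ := 2^36 * 3

lemma net_card (n : ℕ) : ((net n).card : ℝ) ≤ base ^ n := by
  have h1 : ∀ k ∈ net n, (1:ℝ) ≤ (2^36)^n * ∏ i, ((1:ℝ)/2)^(k i).natAbs := by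
    intro k hk
    simp only [net, Finset.mem_filter] at hk
    have h2 : ∑ i, (k i).natAbs ≤ 36 * n := by
      have : ((∑ i, (k i).natAbs : ℕ) : ℤ) ≤ 36 * n := by
        refine le_trans ?_ hk.2
        push_cast
        refine Finset.sum_le_sum fun i _ => ?_
        rw [← sq_abs]
        have := abs_nonneg (k i)
        rcases this.eq_or_lt with h | h
        · rw [← h]; simp
        · nlinarith
      exact_mod_cast this
    rw [Finset.prod_pow_eq_pow_sum, ← pow_mul]
    have h3 : ((1:ℝ)/2)^(36*n) ≤ (1/2)^(∑ i, (k i).natAbs) :=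
      pow_le_pow_of_le_one (by norm_num) (by norm_num) h2
    calc (1:ℝ) = 2^(36*n) * (1/2)^(36*n) := by rw [← mul_pow]; norm_num
      _ ≤ _ := by gcongr
  calc ((net n).card : ℝ) = ∑ k ∈ net n, (1:ℝ) := by simp
    _ ≤ ∑ k ∈ net n, (2^36)^n * ∏ i, ((1:ℝ)/2)^(k i).natAbs := Finset.sum_le_sum h1
    _ ≤ ∑ k ∈ Fintype.piFinset (fun _ : Fin n => Finset.Icc (-((36*n : ℕ):ℤ)) ((36*n : ℕ):ℤ)),
          (2^36)^n * ∏ i, ((1:ℝ)/2)^(k i).natAbs := by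
        refine Finset.sum_le_sum_of_subset_of_nonneg (Finset.filter_subset _ _) ?_
        intros; positivity
    _ = (2^36)^n * ∏ i : Fin n, ∑ k ∈ Finset.Icc (-((36*n : ℕ):ℤ)) ((36*n : ℕ):ℤ), ((1:ℝ)/2)^k.natAbs := by
        rw [Finset.prod_univ_sum, Finset.mul_sum]
    _ ≤ (2^36)^n * ∏ i : Fin n, (3:ℝ) := by
        gcongr with i
        refine (sum_half _).trans ?_
        have : (0:ℝ) ≤ (1/2)^(36*n) := by positivity
        linarith
    _ = base ^ n := by simp [base, mul_pow]

def vec {n : ℕ} (k : Fin n → ℤ) : Fin n → ℝ := fun i => k i / (6 * √n)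

lemma vec_sq {n : ℕ} (hn : 0 < n) (k : Fin n → ℤ) (hk : k ∈ net n) : ∑ i, vec k i ^ 2 ≤ 1 := by
  simp only [net, Finset.mem_filter] at hk
  have h : ((∑ i, (k i)^2 : ℤ) : ℝ) ≤ 36 * n := by exact_mod_cast hk.2
  push_cast at h
  have hn' : (0:ℝ) < n := by exact_mod_cast hn
  simp only [vec, div_pow, mul_pow, Real.sq_sqrt hn'.le, ← Finset.sum_div]
  rw [div_le_one (by positivity)]
  linarith

lemma round_int (t : ℝ) : ∃ k : ℤ, |(k:ℝ)| ≤ |t| ∧ |t - k| ≤ 1 := by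
  rcases le_total 0 t with h | h
  · refine ⟨⌊t⌋, ?_, ?_⟩
    · have h0 : (0:ℝ) ≤ ⌊t⌋ := by exact_mod_cast Int.floor_nonneg.2 h
      rw [abs_of_nonneg h, abs_of_nonneg h0]; exact Int.floor_le t
    · rw [abs_le]; constructor <;> linarith [Int.floor_le t, Int.lt_floor_add_one t]
  · refine ⟨⌈t⌉, ?_, ?_⟩
    · have h0 : (⌈t⌉ : ℝ) ≤ 0 := by exact_mod_cast Int.ceil_le.2 (by simpa using h)
      rw [abs_of_nonpos h, abs_of_nonpos h0]; linarith [Int.le_ceil t]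
    · rw [abs_le]; constructor <;> linarith [Int.le_ceil t, Int.ceil_lt_add_one t]

lemma net_approx {n : ℕ} (hn : 0 < n) (x : Fin n → ℝ) (hx : ∑ i, x i ^ 2 ≤ 1) :
    ∃ k ∈ net n, ∑ i, (6 * (x i - vec k i)) ^ 2 ≤ 1 := by
  have hn' : (0:ℝ) < n := by exact_mod_cast hn
  have hs : 0 < √(n:ℝ) := Real.sqrt_pos.2 hn'
  have hs2 : √(n:ℝ)^2 = n := Real.sq_sqrt hn'.le
  choose k hk1 hk2 using fun i => round_int (x i * (6 * √n))
  have hsum : ∑ i, (k i)^2 ≤ 36 * (n:ℤ) := by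
    have : ∑ i, ((k i : ℝ))^2 ≤ 36 * n := by
      calc ∑ i, ((k i : ℝ))^2 ≤ ∑ i, (36 * n) * x i ^ 2 := by
            refine Finset.sum_le_sum fun i _ => ?_
            have := sq_le_sq.2 (hk1 i)
            rw [mul_pow, mul_pow, hs2] at this
            linarith
        _ = (36 * n) * ∑ i, x i ^ 2 := by rw [Finset.mul_sum]
        _ ≤ 36 * n := by nlinarith
    exact_mod_cast this
  refine ⟨k, ?_, ?_⟩
  · simp only [net, Finset.mem_filter, Fintype.mem_piFinset, Finset.mem_Icc]
    refine ⟨fun i => ?_, hsum⟩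
    have h1 : (k i)^2 ≤ 36 * (n:ℤ) :=
      (Finset.single_le_sum (f := fun i => (k i)^2) (fun i _ => sq_nonneg _) (Finset.mem_univ i)).trans hsum
    push_cast
    have hn1 : (1:ℤ) ≤ n := by exact_mod_cast hn
    constructor <;> nlinarith
  · have : ∀ i, (6 * (x i - vec k i)) ^ 2 ≤ 1 / n := by
      intro i
      have h1 : 6 * (x i - vec k i) = (x i * (6 * √n) - k i) / √n := by
        simp only [vec]; field_simp
      rw [h1, div_pow, hs2]
      gcongr
      exact (sq_le_one_iff_abs_le_one _).2 (hk2 i)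
    calc _ ≤ ∑ i : Fin n, (1:ℝ) / n := Finset.sum_le_sum fun i _ => this i
      _ = 1 := by simp; field_simp

def sgn (b : Bool) : ℝ := if b then 1 else -1

lemma mgf {ι : Type*} [Fintype ι] [DecidableEq ι] (a : ι → ℝ) :
    ∑ e : ι → Bool, Real.exp (∑ j, sgn (e j) * a j) ≤
      (Fintype.card (ι → Bool) : ℝ) * Real.exp ((∑ j, a j ^ 2) / 2) := by
  have h := Finset.prod_univ_sum (fun _ : ι => (Finset.univ : Finset Bool))
    (fun j b => Real.exp (sgn b * a j))
  rw [Fintype.piFinset_univ] at h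
  simp only [Real.exp_sum]
  rw [← h, Finset.sum_div, Real.exp_sum]
  have : (Fintype.card (ι → Bool) : ℝ) = ∏ j : ι, (2:ℝ) := by simp
  rw [this, ← Finset.prod_mul_distrib]
  refine Finset.prod_le_prod (fun i _ => by positivity) fun i _ => ?_
  have := Real.cosh_le_exp_half_sq (a i)
  rw [Real.cosh_eq] at this
  simp [sgn]
  linarith

variable {n₁ n₂ n₃ : ℕ}

def T (e : Fin n₁ × Fin n₂ × Fin n₃ → Bool) (x : Fin n₁ → ℝ) (y : Fin n₂ → ℝ) (z : Fin n₃ → ℝ) : ℝ :=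
  ∑ j, sgn (e j) * (x j.1 * y j.2.1 * z j.2.2)

lemma sum_sq (x : Fin n₁ → ℝ) (y : Fin n₂ → ℝ) (z : Fin n₃ → ℝ) :
    ∑ j : Fin n₁ × Fin n₂ × Fin n₃, (x j.1 * y j.2.1 * z j.2.2)^2 =
      (∑ i, x i^2) * (∑ i, y i^2) * (∑ i, z i^2) := by
  simp only [Fintype.sum_prod_type, mul_pow]
  simp only [← Finset.mul_sum, ← Finset.sum_mul]

lemma exists_good (h₁ : 0 < n₁) (h₂ : 0 < n₂) (h₃ : 0 < n₃) :
    ∃ e : Fin n₁ × Fin n₂ × Fin n₃ → Bool, ∀ k₁ ∈ net n₁, ∀ k₂ ∈ net n₂, ∀ k₃ ∈ net n₃,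
      T e (vec k₁) (vec k₂) (vec k₃) ≤ (Real.log base + 1/2) * √((n₁:ℝ)+n₂+n₃) := by
  set N : ℝ := (n₁:ℝ)+n₂+n₃ with hN
  have hNpos : 0 < N := by have : (0:ℝ) < n₁ := by exact_mod_cast h₁
                           positivity
  set l := √N with hl
  have hlpos : 0 < l := Real.sqrt_pos.2 hNpos
  have hl2 : l^2 = N := Real.sq_sqrt hNpos.le
  have hb : 0 < base := by norm_num [base]
  let P := net n₁ ×ˢ net n₂ ×ˢ net n₃
  have hP : (P.card : ℝ) ≤ base ^ (n₁ + n₂ + n₃) := by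
    simp only [P, Finset.card_product]
    push_cast
    rw [pow_add, pow_add, mul_assoc]
    have := net_card n₁; have := net_card n₂; have := net_card n₃
    gcongr
  let F : (Fin n₁ × Fin n₂ × Fin n₃ → Bool) → (Fin n₁ → ℤ) × (Fin n₂ → ℤ) × (Fin n₃ → ℤ) → ℝ :=
    fun e k => Real.exp (l * T e (vec k.1) (vec k.2.1) (vec k.2.2))
  have key : ∑ e, ∑ k ∈ P, F e k ≤
      ∑ e : (Fin n₁ × Fin n₂ × Fin n₃ → Bool), base ^ (n₁+n₂+n₃) * Real.exp (N/2) := by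
    rw [Finset.sum_comm]
    calc _ ≤ ∑ k ∈ P, (Fintype.card (Fin n₁ × Fin n₂ × Fin n₃ → Bool) : ℝ) * Real.exp (N/2) := by
          refine Finset.sum_le_sum fun k hk => ?_
          simp only [P, Finset.mem_product] at hk
          have := mgf (fun j : Fin n₁ × Fin n₂ × Fin n₃ =>
            l * (vec k.1 j.1 * vec k.2.1 j.2.1 * vec k.2.2 j.2.2))
          simp only [mul_pow l, ← Finset.mul_sum] at this
          rw [sum_sq, hl2] at this
          have e1 := vec_sq h₁ _ hk.1
          have e2 := vec_sq h₂ _ hk.2.1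
          have e3 := vec_sq h₃ _ hk.2.2
          have p1 : 0 ≤ ∑ i, vec k.1 i ^ 2 := Finset.sum_nonneg fun _ _ => sq_nonneg _
          have p2 : 0 ≤ ∑ i, vec k.2.1 i ^ 2 := Finset.sum_nonneg fun _ _ => sq_nonneg _
          have p3 : 0 ≤ ∑ i, vec k.2.2 i ^ 2 := Finset.sum_nonneg fun _ _ => sq_nonneg _
          have e4 := mul_le_one₀ (mul_le_one₀ e1 p2 e2) p3 e3
          refine le_trans (le_of_eq ?_) (this.trans ?_)
          · refine Finset.sum_congr rfl fun e _ => ?_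
            simp only [F, T, Finset.mul_sum]
            congr 1
            refine Finset.sum_congr rfl fun j _ => ?_
            ring
          · gcongr
            nlinarith
      _ = P.card * ((Fintype.card (Fin n₁ × Fin n₂ × Fin n₃ → Bool) : ℝ) * Real.exp (N/2)) := by
          simp
      _ ≤ base ^ (n₁+n₂+n₃) * ((Fintype.card (Fin n₁ × Fin n₂ × Fin n₃ → Bool) : ℝ) * Real.exp (N/2)) := by
          gcongr
      _ = _ := by rw [Finset.sum_const, Finset.card_univ, nsmul_eq_mul]; ring
  obtain ⟨e, -, he⟩ := Finset.exists_le_of_sum_le Finset.univ_nonempty key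
  refine ⟨e, fun k₁ hk₁ k₂ hk₂ k₃ hk₃ => ?_⟩
  have h := (Finset.single_le_sum (f := F e) (fun k _ => (Real.exp_pos _).le)
    (show (k₁, k₂, k₃) ∈ P by simp [P, hk₁, hk₂, hk₃])).trans he
  have hbe : base ^ (n₁+n₂+n₃) = Real.exp (N * Real.log base) := by
    rw [← Real.exp_log (pow_pos hb _), Real.log_pow, hN]; push_cast; rfl
  rw [hbe, ← Real.exp_add, Real.exp_le_exp] at h
  simp only at h
  have : l * T e (vec k₁) (vec k₂) (vec k₃) ≤ l * ((Real.log base + 1/2) * l) := by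
    refine h.trans (le_of_eq ?_)
    rw [← hl2]; ring
  exact le_of_mul_le_mul_left this hlpos

lemma T_add1 (e : Fin n₁ × Fin n₂ × Fin n₃ → Bool) (x x' y z) :
    T e x y z = T e x' y z + T e (fun i => 6 * (x i - x' i)) y z / 6 := by
  simp only [T, Finset.sum_div, ← Finset.sum_add_distrib]
  exact Finset.sum_congr rfl fun j _ => by ring
lemma T_add2 (e : Fin n₁ × Fin n₂ × Fin n₃ → Bool) (x y y' z) :
    T e x y z = T e x y' z + T e x (fun i => 6 * (y i - y' i)) z / 6 := by
  simp only [T, Finset.sum_div, ← Finset.sum_add_distrib]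
  exact Finset.sum_congr rfl fun j _ => by ring
lemma T_add3 (e : Fin n₁ × Fin n₂ × Fin n₃ → Bool) (x y z z') :
    T e x y z = T e x y z' + T e x y (fun i => 6 * (z i - z' i)) / 6 := by
  simp only [T, Finset.sum_div, ← Finset.sum_add_distrib]
  exact Finset.sum_congr rfl fun j _ => by ring

lemma abs_coord {n : ℕ} (x : Fin n → ℝ) (hx : ∑ i, x i ^ 2 ≤ 1) (i) : |x i| ≤ 1 :=
  (sq_le_one_iff_abs_le_one _).1 ((Finset.single_le_sum (f := fun i => (x i)^2)
    (fun i _ => sq_nonneg _) (Finset.mem_univ i)).trans hx)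

lemma bound_unit (h₁ : 0 < n₁) (h₂ : 0 < n₂) (h₃ : 0 < n₃)
    (e : Fin n₁ × Fin n₂ × Fin n₃ → Bool) (M : ℝ)
    (he : ∀ k₁ ∈ net n₁, ∀ k₂ ∈ net n₂, ∀ k₃ ∈ net n₃, T e (vec k₁) (vec k₂) (vec k₃) ≤ M)
    (x y z) (hx : ∑ i, x i ^ 2 ≤ 1) (hy : ∑ i, y i ^ 2 ≤ 1) (hz : ∑ i, z i ^ 2 ≤ 1) :
    T e x y z ≤ 2 * M := by
  let S : Set ℝ := {t | ∃ x y z, ∑ i, x i ^ 2 ≤ 1 ∧ ∑ i, y i ^ 2 ≤ 1 ∧ ∑ i, z i ^ 2 ≤ 1 ∧ t = T e x y z}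
  have hbdd : BddAbove S := by
    refine ⟨∑ j : Fin n₁ × Fin n₂ × Fin n₃, (1:ℝ), ?_⟩
    rintro t ⟨x, y, z, hx, hy, hz, rfl⟩
    refine Finset.sum_le_sum fun j _ => (le_abs_self _).trans ?_
    rw [abs_mul, abs_mul, abs_mul]
    have : |sgn (e j)| = 1 := by unfold sgn; split_ifs <;> simp
    rw [this, one_mul]
    exact mul_le_one₀ (mul_le_one₀ (abs_coord x hx _) (abs_nonneg _) (abs_coord y hy _))
      (abs_nonneg _) (abs_coord z hz _)
  have hle : ∀ x y z, ∑ i, x i ^ 2 ≤ 1 → ∑ i, y i ^ 2 ≤ 1 → ∑ i, z i ^ 2 ≤ 1 → T e x y z ≤ sSup S :=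
    fun x y z hx hy hz => le_csSup hbdd ⟨x, y, z, hx, hy, hz, rfl⟩
  have h2 : sSup S ≤ M + sSup S / 2 := by
    refine csSup_le ⟨_, x, y, z, hx, hy, hz, rfl⟩ ?_
    rintro t ⟨x, y, z, hx, hy, hz, rfl⟩
    obtain ⟨k₁, hk₁, a₁⟩ := net_approx h₁ x hx
    obtain ⟨k₂, hk₂, a₂⟩ := net_approx h₂ y hy
    obtain ⟨k₃, hk₃, a₃⟩ := net_approx h₃ z hz
    rw [T_add1 e x (vec k₁), T_add2 e (vec k₁) y (vec k₂), T_add3 e (vec k₁) (vec k₂) z (vec k₃)]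
    have b1 := hle _ _ _ a₁ hy hz
    have b2 := hle _ _ _ (vec_sq h₁ _ hk₁) a₂ hz
    have b3 := hle _ _ _ (vec_sq h₁ _ hk₁) (vec_sq h₂ _ hk₂) a₃
    have b4 := he _ hk₁ _ hk₂ _ hk₃
    linarith
  linarith [hle x y z hx hy hz]

lemma scale {n : ℕ} (x : Fin n → ℝ) (a : ℝ) (ha : 0 < a) (hx : ∑ i, x i ^ 2 ≤ a^2) :
    ∑ i, (x i / a) ^ 2 ≤ 1 := by
  simp only [div_pow, ← Finset.sum_div]
  rwa [div_le_one (by positivity)]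

lemma bound_abs (e : Fin n₁ × Fin n₂ × Fin n₃ → Bool) (M : ℝ)
    (he : ∀ x y z, ∑ i, x i ^ 2 ≤ 1 → ∑ i, y i ^ 2 ≤ 1 → ∑ i, z i ^ 2 ≤ 1 → T e x y z ≤ M)
    (x y z) (a b c : ℝ) (ha : 0 < a) (hb : 0 < b) (hc : 0 < c)
    (hx : ∑ i, x i ^ 2 ≤ a^2) (hy : ∑ i, y i ^ 2 ≤ b^2) (hz : ∑ i, z i ^ 2 ≤ c^2) :
    |T e x y z| ≤ M * (a * b * c) := by
  have key : ∀ x : Fin n₁ → ℝ, ∑ i, x i ^ 2 ≤ a^2 → T e x y z ≤ M * (a*b*c) := by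
    intro x hx
    have := he _ _ _ (scale x a ha hx) (scale y b hb hy) (scale z c hc hz)
    have h2 : T e x y z = T e (fun i => x i / a) (fun i => y i / b) (fun i => z i / c) * (a*b*c) := by
      simp only [T, Finset.sum_mul]
      refine Finset.sum_congr rfl fun j _ => ?_
      field_simp
    rw [h2]
    gcongr
  rw [abs_le]
  refine ⟨?_, key x hx⟩
  have := key (fun i => - x i) (by simpa using hx)
  have h2 : T e (fun i => - x i) y z = - T e x y z := by
    simp only [T, ← Finset.sum_neg_distrib]
    exact Finset.sum_congr rfl fun j _ => by ring
  linarith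

def TK (𝕂 : Type*) [RCLike 𝕂] (e : Fin n₁ × Fin n₂ × Fin n₃ → Bool)
    (x : Fin n₁ → 𝕂) (y : Fin n₂ → 𝕂) (z : Fin n₃ → 𝕂) : 𝕂 :=
  ∑ j, ((sgn (e j) : ℝ) : 𝕂) * (x j.1 * y j.2.1 * z j.2.2)

variable {𝕂 : Type*} [RCLike 𝕂]

lemma re_sum {n : ℕ} (x : Fin n → 𝕂) (a : ℝ) (hx : ∑ i, ‖x i‖^2 ≤ a) :
    ∑ i, (RCLike.re (x i))^2 ≤ a :=
  (Finset.sum_le_sum fun i _ => by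
    rw [← sq_abs]; gcongr; exact RCLike.abs_re_le_norm _).trans hx
lemma im_sum {n : ℕ} (x : Fin n → 𝕂) (a : ℝ) (hx : ∑ i, ‖x i‖^2 ≤ a) :
    ∑ i, (RCLike.im (x i))^2 ≤ a :=
  (Finset.sum_le_sum fun i _ => by
    rw [← sq_abs]; gcongr; exact RCLike.abs_im_le_norm _).trans hx

lemma norm_term (c : 𝕂) (hc : ‖c‖ ≤ 1) (t B : ℝ) (h : |t| ≤ B) : ‖c * (t : 𝕂)‖ ≤ B := by
  rw [norm_mul, RCLike.norm_ofReal]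
  nlinarith [abs_nonneg t, norm_nonneg c]

lemma bound_K (e : Fin n₁ × Fin n₂ × Fin n₃ → Bool) (M : ℝ)
    (he : ∀ x y z, ∑ i, x i ^ 2 ≤ 1 → ∑ i, y i ^ 2 ≤ 1 → ∑ i, z i ^ 2 ≤ 1 → T e x y z ≤ M)
    (x : Fin n₁ → 𝕂) (y : Fin n₂ → 𝕂) (z : Fin n₃ → 𝕂)
    (a b c : ℝ) (ha : 0 < a) (hb : 0 < b) (hc : 0 < c)
    (hx : ∑ i, ‖x i‖ ^ 2 ≤ a^2) (hy : ∑ i, ‖y i‖ ^ 2 ≤ b^2) (hz : ∑ i, ‖z i‖ ^ 2 ≤ c^2) :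
    ‖TK 𝕂 e x y z‖ ≤ 8 * (M * (a * b * c)) := by
  set B := M * (a*b*c)
  let x1 := fun i => RCLike.re (x i)
  let x2 := fun i => RCLike.im (x i)
  let y1 := fun i => RCLike.re (y i)
  let y2 := fun i => RCLike.im (y i)
  let z1 := fun i => RCLike.re (z i)
  let z2 := fun i => RCLike.im (z i)
  have hB := fun x y z hx hy hz => bound_abs e M he x y z a b c ha hb hc hx hy hz
  let I : 𝕂 := RCLike.I
  have hI : ‖I‖ ≤ 1 := by
    rcases eq_or_ne I 0 with h | h
    · simp [h]
    · exact (RCLike.norm_I_of_ne_zero h).le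
  have hI2 : ‖I^2‖ ≤ 1 := by rw [norm_pow]; exact pow_le_one₀ (norm_nonneg _) hI
  have hI3 : ‖I^3‖ ≤ 1 := by rw [norm_pow]; exact pow_le_one₀ (norm_nonneg _) hI
  have h1 : ‖(1:𝕂)‖ ≤ 1 := by simp
  have expand : TK 𝕂 e x y z =
      1 * (T e x1 y1 z1 : 𝕂) + I * (T e x2 y1 z1 : 𝕂) + I * (T e x1 y2 z1 : 𝕂)
      + I * (T e x1 y1 z2 : 𝕂) + I^2 * (T e x2 y2 z1 : 𝕂) + I^2 * (T e x2 y1 z2 : 𝕂)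
      + I^2 * (T e x1 y2 z2 : 𝕂) + I^3 * (T e x2 y2 z2 : 𝕂) := by
    simp only [T, TK, RCLike.ofReal_sum, Finset.mul_sum, ← Finset.sum_add_distrib]
    refine Finset.sum_congr rfl fun j _ => ?_
    have ex := (RCLike.re_add_im (x j.1)).symm
    have ey := (RCLike.re_add_im (y j.2.1)).symm
    have ez := (RCLike.re_add_im (z j.2.2)).symm
    simp only [RCLike.ofReal_mul, x1, x2, y1, y2, z1, z2, I]
    refine (congrArg₂ (· * ·) rfl (congrArg₂ (· * ·) (congrArg₂ (· * ·) ex ey) ez)).trans ?_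
    ring
  have rx := re_sum x _ hx
  have ix := im_sum x _ hx
  have ry := re_sum y _ hy
  have iy := im_sum y _ hy
  have rz := re_sum z _ hz
  have iz := im_sum z _ hz
  rw [expand]
  have t1 := norm_term 1 h1 _ _ (hB _ _ _ rx ry rz)
  have t2 := norm_term I hI _ _ (hB _ _ _ ix ry rz)
  have t3 := norm_term I hI _ _ (hB _ _ _ rx iy rz)
  have t4 := norm_term I hI _ _ (hB _ _ _ rx ry iz)
  have t5 := norm_term (I^2) hI2 _ _ (hB _ _ _ ix iy rz)
  have t6 := norm_term (I^2) hI2 _ _ (hB _ _ _ ix ry iz)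
  have t7 := norm_term (I^2) hI2 _ _ (hB _ _ _ rx iy iz)
  have t8 := norm_term (I^3) hI3 _ _ (hB _ _ _ ix iy iz)
  refine (norm_add_le_of_le (norm_add_le_of_le (norm_add_le_of_le (norm_add_le_of_le
    (norm_add_le_of_le (norm_add_le_of_le (norm_add_le_of_le t1 t2) t3) t4) t5) t6) t7) t8).trans ?_
  linarith

lemma lp32 {n : ℕ} (x : Fin n → 𝕂) (h : lpNorm (3/2) x ≤ 1) : ∑ i, ‖x i‖^2 ≤ (1:ℝ)^2 := by
  have hne : (3/2 : ℝ≥0∞) ≠ ∞ := ENNReal.div_ne_top (by simp) (by simp)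
  have htr : (3/2 : ℝ≥0∞).toReal = 3/2 := by simp [ENNReal.toReal_div]
  rw [lpNorm, if_neg hne, htr] at h
  have hs : 0 ≤ ∑ j, ‖x j‖ ^ (3/2:ℝ) := Finset.sum_nonneg fun _ _ => by positivity
  have h1 : ∑ j, ‖x j‖ ^ (3/2:ℝ) ≤ 1 := by
    by_contra hc
    push Not at hc
    exact absurd h (not_le.2 (Real.one_lt_rpow hc (by norm_num)))
  rw [one_pow]
  refine le_trans (Finset.sum_le_sum fun i _ => ?_) h1
  have h2 : ‖x i‖ ^ (3/2:ℝ) ≤ 1 := (Finset.single_le_sum (f := fun i => ‖x i‖ ^ (3/2:ℝ))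
    (fun i _ => by positivity) (Finset.mem_univ i)).trans h1
  have h3 : ‖x i‖ ≤ 1 := by
    by_contra hc
    push Not at hc
    exact absurd h2 (not_le.2 (Real.one_lt_rpow hc (by norm_num)))
  rw [← Real.rpow_natCast]
  exact Real.rpow_le_rpow_of_exponent_ge' (norm_nonneg _) h3 (by norm_num) (by norm_num)

lemma lp3 {n : ℕ} (hn : 0 < n) (x : Fin n → 𝕂) (h : lpNorm 3 x ≤ 1) :
    ∑ i, ‖x i‖^2 ≤ ((n:ℝ)^((1:ℝ)/6))^2 := by
  rw [lpNorm, if_neg (by simp)] at h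
  simp only [ENNReal.toReal_ofNat] at h
  have h1 : ∑ j, ‖x j‖ ^ (3:ℝ) ≤ 1 := by
    by_contra hc
    push Not at hc
    exact absurd h (not_le.2 (Real.one_lt_rpow hc (by norm_num)))
  have hn' : (0:ℝ) < n := by exact_mod_cast hn
  set r := ((n:ℝ)^((1:ℝ)/6))^2 with hr
  have hrpos : 0 < r := by positivity
  have hr3 : r^3 = n := by
    rw [hr, ← pow_mul, ← Real.rpow_natCast, ← Real.rpow_mul hn'.le]; norm_num
  have h2 : ∀ i, ‖x i‖^2 ≤ (2/3*r) * ‖x i‖^(3:ℝ) + 1/(3*r^2) := by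
    intro i
    have : ‖x i‖^(3:ℝ) = ‖x i‖^3 := by exact_mod_cast Real.rpow_natCast ‖x i‖ 3
    rw [this]
    have hy := norm_nonneg (x i)
    set y := ‖x i‖
    have h3 : 0 ≤ (y*r-1)^2*(2*(y*r)+1) := by positivity
    have h4 : (2/3*r) * y^3 + 1/(3*r^2) - y^2 = (y*r-1)^2*(2*(y*r)+1) / (3*r^2) := by
      field_simp; ring
    have : 0 ≤ (y*r-1)^2*(2*(y*r)+1) / (3*r^2) := by positivity
    linarith
  calc _ ≤ ∑ i, ((2/3*r) * ‖x i‖^(3:ℝ) + 1/(3*r^2)) := Finset.sum_le_sum fun i _ => h2 i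
    _ = (2/3*r) * ∑ i, ‖x i‖^(3:ℝ) + n * (1/(3*r^2)) := by
        rw [Finset.sum_add_distrib, Finset.mul_sum]; simp
    _ ≤ (2/3*r) * 1 + n * (1/(3*r^2)) := by gcongr
    _ = r := by rw [← hr3]; field_simp; norm_num

def idx (j : ∀ k : Fin 3, Fin (![n₁,n₂,n₃] k)) : Fin n₁ × Fin n₂ × Fin n₃ := (j 0, j 1, j 2)

def idxEquiv : (∀ k : Fin 3, Fin (![n₁,n₂,n₃] k)) ≃ Fin n₁ × Fin n₂ × Fin n₃ where
  toFun := idx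
  invFun p := fun k => match k with
    | 0 => p.1
    | 1 => p.2.1
    | 2 => p.2.2
  left_inv j := by
    funext k; fin_cases k <;> rfl
  right_inv p := rfl

def form (𝕂 : Type*) [RCLike 𝕂] (e : Fin n₁ × Fin n₂ × Fin n₃ → Bool) :
    MultilinearMap 𝕂 (fun k : Fin 3 => Fin (![n₁, n₂, n₃] k) → 𝕂) 𝕂 :=
  coeffForm (fun j => ((sgn (e (idx j)) : ℝ) : 𝕂))

lemma coeffForm_apply {m : ℕ} {n : Fin m → ℕ} (c : (∀ k, Fin (n k)) → 𝕂) (x) :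
    coeffForm c x = ∑ j, c j * ∏ k, x k (j k) := by
  simp [coeffForm, mul_comm]

lemma form_apply (e : Fin n₁ × Fin n₂ × Fin n₃ → Bool) (x) :
    form 𝕂 e x = TK 𝕂 e (x 0) (x 1) (x 2) := by
  rw [form, coeffForm_apply]
  refine Fintype.sum_equiv idxEquiv _ _ fun j => ?_
  rw [Fin.prod_univ_three]
  rfl

lemma form_uni (e : Fin n₁ × Fin n₂ × Fin n₃ → Bool) : Unimodular (form 𝕂 e) := by
  intro j
  rw [form, coeffForm_apply, Finset.sum_eq_single j]
  · simp [sgn]; split_ifs <;> simp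
  · intro b _ hb
    obtain ⟨k, hk⟩ := Function.ne_iff.1 hb
    rw [Finset.prod_eq_zero (Finset.mem_univ k), mul_zero]
    rw [Pi.single_eq_of_ne hk]
  · simp

end TriAux

/-- For `p₁ = 3/2`, `p₂ = p₃ = 3`: there is `C > 0` such that for all positive integers
`n₁, n₂, n₃` there is a unimodular trilinear form
`A : ℓ_{3/2}^{n₁} × ℓ_3^{n₂} × ℓ_3^{n₃} → 𝕂` with
`‖A‖ ≤ C (n₁ + n₂ + n₃)^{1/2} n₂^{1/6} n₃^{1/6}`. -/
theorem trilinear_upper_bound_example {𝕂 : Type*} [RCLike 𝕂] (m : ℕ) (hm : 0 < m) :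
    ∃ C : ℝ, 0 < C ∧
      ∀ n₁ n₂ n₃ : ℕ, 0 < n₁ → 0 < n₂ → 0 < n₃ →
        ∃ A : MultilinearMap 𝕂 (fun k : Fin 3 => Fin (![n₁, n₂, n₃] k) → 𝕂) 𝕂,
          Unimodular A ∧
            opNorm ![3 / 2, 3, 3] A ≤
              C * ((n₁ : ℝ) + (n₂ : ℝ) + (n₃ : ℝ)) ^ ((1 : ℝ) / 2)
                * (n₂ : ℝ) ^ ((1 : ℝ) / 6) * (n₃ : ℝ) ^ ((1 : ℝ) / 6) := by
  have hb : 0 < Real.log TriAux.base := Real.log_pos (by norm_num [TriAux.base])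
  refine ⟨16 * (Real.log TriAux.base + 1/2), by positivity, fun n₁ n₂ n₃ h₁ h₂ h₃ => ?_⟩
  obtain ⟨e, he⟩ := TriAux.exists_good h₁ h₂ h₃
  refine ⟨TriAux.form 𝕂 e, TriAux.form_uni e, ?_⟩
  refine Real.sSup_le ?_ (by positivity)
  rintro t ⟨x, hx, rfl⟩
  rw [TriAux.form_apply]
  have hn2 : (0:ℝ) < n₂ := by exact_mod_cast h₂
  have hn3 : (0:ℝ) < n₃ := by exact_mod_cast h₃
  have := TriAux.bound_K (𝕂 := 𝕂) e _ (TriAux.bound_unit h₁ h₂ h₃ e _ he) (x 0) (x 1) (x 2)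
    1 ((n₂ : ℝ) ^ ((1 : ℝ) / 6)) ((n₃ : ℝ) ^ ((1 : ℝ) / 6)) one_pos (by positivity) (by positivity)
    (TriAux.lp32 _ (hx 0)) (TriAux.lp3 h₂ _ (hx 1)) (TriAux.lp3 h₃ _ (hx 2))
  refine this.trans (le_of_eq ?_)
  rw [Real.sqrt_eq_rpow]
  ring
end
end

section
/- Let n_1, n_2 be positive integers, n := max{n_1, n_2}, and p_1, p_2 ∈ [2, ∞]. Define the bilinear form A : ℓ_{p_1}^{n_1} × ℓ_{p_2}^{n_2} → ℂ by A(x, y) = Σ_{i=1}^{n_1} Σ_{j=1}^{n_2} e^{2πi·ij/n} x_i y_j. Then ‖A‖ ≤ n^{1/2} · n_1^{1/2 − 1/p_1} · n_2^{1/2 − 1/p_2} (with the convention 1/∞ = 0). Note that A is unimodular, since all its coefficients e^{2πi·ij/n} have modulus 1. -/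
open scoped BigOperators ENNReal

noncomputable section

lemma aux_orth (n : ℕ) (ω : ℂ) (hω : IsPrimitiveRoot ω n) (hn : 0 < n) (i k : ℕ) (hi : i < n) (hk : k < n) :
    ∑ j ∈ Finset.range n, ω ^ ((i+1)*(j+1)) * (starRingEnd ℂ) (ω ^ ((k+1)*(j+1))) = if i = k then (n:ℂ) else 0 := by
  have hnorm : ‖ω‖ = 1 := hω.norm'_eq_one hn.ne'
  have hω0 : ω ≠ 0 := hω.ne_zero hn.ne'
  have hconj : (starRingEnd ℂ) ω = ω⁻¹ := (Complex.inv_eq_conj hnorm).symm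
  have h1 : ∀ j, ω ^ ((i+1)*(j+1)) * (starRingEnd ℂ) (ω ^ ((k+1)*(j+1))) = (ω^(i+1) * (ω^(k+1))⁻¹) * (ω^(i+1) * (ω^(k+1))⁻¹)^j := by
    intro j
    rw [← pow_succ', map_pow, hconj, pow_mul, pow_mul, mul_pow, inv_pow]
  simp_rw [h1]
  rw [← Finset.mul_sum]
  split_ifs with h
  · subst h
    have : ω^(i+1) * (ω^(i+1))⁻¹ = 1 := mul_inv_cancel₀ (pow_ne_zero _ hω0)
    simp [this]
  · have hz : ω^(i+1) * (ω^(k+1))⁻¹ ≠ 1 := by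
      intro h2
      rw [mul_inv_eq_one₀ (pow_ne_zero _ hω0)] at h2
      rw [pow_succ, pow_succ] at h2
      exact h (hω.pow_inj hi hk (mul_right_cancel₀ hω0 h2))
    rw [geom_sum_eq hz]
    have : (ω^(i+1) * (ω^(k+1))⁻¹)^n = 1 := by
      rw [mul_pow, inv_pow, ← pow_mul, ← pow_mul, mul_comm _ n, mul_comm _ n, pow_mul, pow_mul, hω.pow_eq_one]
      simp
    simp [this]

lemma aux_planch (n m : ℕ) (hmn : m ≤ n) (ω : ℂ) (hω : IsPrimitiveRoot ω n) (hn : 0 < n) (x : Fin m → ℂ) :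
    ∑ j ∈ Finset.range n, ‖∑ i, ω ^ ((i.1+1)*(j+1)) * x i‖^2 = n * ∑ i, ‖x i‖^2 := by
  have : (((∑ j ∈ Finset.range n, ‖∑ i, ω ^ ((i.1+1)*(j+1)) * x i‖^2 : ℝ)) : ℂ) = ((n * ∑ i, ‖x i‖^2 : ℝ) : ℂ) := by
    push_cast
    simp_rw [← Complex.mul_conj', map_sum, Finset.sum_mul_sum, map_mul]
    rw [Finset.sum_comm]
    rw [Finset.mul_sum]
    refine Finset.sum_congr rfl fun i _ => ?_
    rw [Finset.sum_comm]
    have : ∀ k : Fin m, ∑ j ∈ Finset.range n, ω ^ ((i.1+1)*(j+1)) * x i * ((starRingEnd ℂ) (ω ^ ((k.1+1)*(j+1))) * (starRingEnd ℂ) (x k)) = (if i = k then (n:ℂ) else 0) * (x i * (starRingEnd ℂ) (x k)) := by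
      intro k
      have := aux_orth n ω hω hn i k (i.2.trans_le hmn) (k.2.trans_le hmn)
      simp only [← Fin.ext_iff] at this
      rw [← this, Finset.sum_mul]
      exact Finset.sum_congr rfl fun j _ => by ring
    simp_rw [this]
    simp
  exact_mod_cast this

lemma aux_bil (n n₁ n₂ : ℕ) (h1 : n₁ ≤ n) (h2 : n₂ ≤ n) (ω : ℂ) (hω : IsPrimitiveRoot ω n) (hn : 0 < n)
    (x : Fin n₁ → ℂ) (y : Fin n₂ → ℂ) :
    ‖∑ i, ∑ j, ω ^ ((i.1+1)*(j.1+1)) * (x i * y j)‖ ≤ √n * √(∑ i, ‖x i‖^2) * √(∑ j, ‖y j‖^2) := by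
  have e : ∑ i, ∑ j, ω ^ ((i.1+1)*(j.1+1)) * (x i * y j) = ∑ j, (∑ i, ω ^ ((i.1+1)*(j.1+1)) * x i) * y j := by
    rw [Finset.sum_comm]
    refine Finset.sum_congr rfl fun j _ => ?_
    rw [Finset.sum_mul]
    exact Finset.sum_congr rfl fun i _ => by ring
  rw [e, ← Real.sqrt_mul (by positivity), ← aux_planch n n₁ h1 ω hω hn x]
  refine (norm_sum_le _ _).trans ?_
  simp_rw [norm_mul]
  refine (Real.sum_mul_le_sqrt_mul_sqrt _ _ _).trans ?_
  gcongr
  rw [Fin.sum_univ_eq_sum_range (fun j => ‖∑ i : Fin n₁, ω ^ ((i.1+1)*(j+1)) * x i‖^2)]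
  exact Finset.sum_le_sum_of_subset_of_nonneg (Finset.range_mono h2) fun _ _ _ => by positivity

lemma aux_lp (m : ℕ) (hm : 0 < m) (p : ℝ≥0∞) (hp : 2 ≤ p) (x : Fin m → ℂ) (hx : lpNorm p x ≤ 1) :
    √(∑ i, ‖x i‖^2) ≤ (m:ℝ) ^ ((1:ℝ)/2 - (1/p).toReal) := by
  unfold lpNorm at hx
  have hm' : (0:ℝ) < m := by exact_mod_cast hm
  split_ifs at hx with h
  · subst h
    have : ∀ i, ‖x i‖ ≤ 1 := fun i => (le_ciSup (f := fun j => ‖x j‖) (Set.finite_range _).bddAbove i).trans hx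
    simp only [one_div, ENNReal.inv_top, ENNReal.toReal_zero, sub_zero]
    rw [← one_div, ← Real.sqrt_eq_rpow]
    apply Real.sqrt_le_sqrt
    calc ∑ i, ‖x i‖^2 ≤ ∑ i : Fin m, (1:ℝ) := Finset.sum_le_sum fun i _ => pow_le_one₀ (norm_nonneg _) (this i)
      _ = m := by simp
  · have hq : 2 ≤ p.toReal := by
      have := (ENNReal.toReal_le_toReal (by simp) h).2 hp
      simpa using this
    rw [one_div p, ENNReal.toReal_inv]
    generalize p.toReal = q at *
    have hq0 : 0 < q := by linarith
    have hS : ∑ j, ‖x j‖ ^ q ≤ 1 := by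
      by_contra! hh
      exact absurd hx (not_le.2 (Real.one_lt_rpow hh (by positivity)))
    have hT : 0 ≤ ∑ i, ‖x i‖^2 := by positivity
    have key := Real.rpow_sum_le_const_mul_sum_rpow (Finset.univ) (fun i => ‖x i‖^2) (p := q/2) (by linarith)
    have e : ∀ i, |‖x i‖^2| ^ (q/2) = ‖x i‖ ^ q := by
      intro i
      rw [abs_of_nonneg (by positivity), ← Real.rpow_natCast, ← Real.rpow_mul (norm_nonneg _)]
      congr 1
      push_cast
      ring
    simp_rw [e] at key
    simp only [abs_pow, abs_norm] at key
    have key2 : (∑ i, ‖x i‖^2) ^ (q/2) ≤ (m:ℝ) ^ (q/2 - 1) := by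
      refine key.trans ?_
      simp only [Finset.card_univ, Fintype.card_fin]
      exact mul_le_of_le_one_right (by positivity) hS
    have key3 := Real.rpow_le_rpow (by positivity) key2 (z := 1/q) (by positivity)
    rw [← Real.rpow_mul hT, ← Real.rpow_mul hm'.le] at key3
    rw [Real.sqrt_eq_rpow]
    convert key3 using 2 <;> field_simp

lemma coeffForm_apply {n₁ n₂ : ℕ} (c : (∀ k : Fin 2, Fin (![n₁, n₂] k)) → ℂ) (x : ∀ k : Fin 2, Fin (![n₁, n₂] k) → ℂ) :
    coeffForm c x = ∑ j, c j * (x 0 (j 0) * x 1 (j 1)) := by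
  simp only [coeffForm, sum_apply]
  refine Finset.sum_congr rfl fun j _ => ?_
  simp [MultilinearMap.mkPiRing_apply, mul_comm]

/-- Let `n = max n₁ n₂` and `p₁, p₂ ∈ [2,∞]`. The (unimodular) bilinear form
`A : ℓ_{p₁}^{n₁} × ℓ_{p₂}^{n₂} → ℂ` with coefficients `a_{ij} = e^{2πi·ij/n}` satisfies
`‖A‖ ≤ n^{1/2} · n₁^{1/2 − 1/p₁} · n₂^{1/2 − 1/p₂}`. -/
theorem toeplitz_bilinear_form_norm_bound (n₁ n₂ : ℕ) (h₁ : 0 < n₁) (h₂ : 0 < n₂)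
    (p : Fin 2 → ℝ≥0∞) (hp : ∀ k, 2 ≤ p k)
    (c : (∀ k : Fin 2, Fin (![n₁, n₂] k)) → ℂ)
    (hc : ∀ j, c j = Complex.exp (2 * (Real.pi : ℂ) * Complex.I *
      ((((j 0).1 + 1) * ((j 1).1 + 1) : ℕ) : ℂ) / ((max n₁ n₂ : ℕ) : ℂ))) :
    Unimodular (coeffForm c) ∧
      opNorm p (coeffForm c) ≤
        ((max n₁ n₂ : ℕ) : ℝ) ^ ((1 : ℝ) / 2)
          * (n₁ : ℝ) ^ ((1 : ℝ) / 2 - (1 / p 0).toReal)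
          * (n₂ : ℝ) ^ ((1 : ℝ) / 2 - (1 / p 1).toReal) := by
  have hn : 0 < max n₁ n₂ := lt_max_of_lt_left h₁
  set n := max n₁ n₂ with hnd
  have hω : IsPrimitiveRoot (Complex.exp (2 * (Real.pi : ℂ) * Complex.I / (n:ℂ))) n :=
    Complex.isPrimitiveRoot_exp n hn.ne'
  set ω := Complex.exp (2 * (Real.pi : ℂ) * Complex.I / (n:ℂ)) with hωd
  have hnorm : ‖ω‖ = 1 := hω.norm'_eq_one hn.ne'
  have hc' : ∀ j, c j = ω ^ (((j 0).1 + 1) * ((j 1).1 + 1)) := by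
    intro j
    rw [hc, hωd, ← Complex.exp_nat_mul]
    congr 1
    ring
  constructor
  · intro j
    rw [coeffForm_apply, Finset.sum_eq_single j]
    · have s0 : (Pi.single (j 0) 1 : Fin (![n₁, n₂] 0) → ℂ) (j 0) = 1 := Pi.single_eq_same _ _
      have s1 : (Pi.single (j 1) 1 : Fin (![n₁, n₂] 1) → ℂ) (j 1) = 1 := Pi.single_eq_same _ _
      rw [s0, s1, hc']
      simp [hnorm]
    · intro b _ hb
      have : b 0 ≠ j 0 ∨ b 1 ≠ j 1 := by
        by_contra! hh
        exact hb (funext (Fin.forall_fin_two.2 hh))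
      rcases this with h | h
      · have s0 : (Pi.single (j 0) 1 : Fin (![n₁, n₂] 0) → ℂ) (b 0) = 0 := Pi.single_eq_of_ne h _
        rw [s0]
        simp
      · have s1 : (Pi.single (j 1) 1 : Fin (![n₁, n₂] 1) → ℂ) (b 1) = 0 := Pi.single_eq_of_ne h _
        rw [s1]
        simp
    · simp
  · unfold opNorm
    apply csSup_le
    · refine ⟨_, 0, fun k => ?_, rfl⟩
      have := hp k
      unfold lpNorm
      split_ifs with h
      · simp
      · have h0 : p k ≠ 0 := by rintro h0; simp [h0] at this
        have : (p k).toReal ≠ 0 := ENNReal.toReal_ne_zero.2 ⟨h0, h⟩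
        simp [Real.zero_rpow this, Real.zero_rpow (inv_ne_zero this)]
    · rintro t ⟨x, hx, rfl⟩
      have e : coeffForm c x = ∑ i : Fin n₁, ∑ j : Fin n₂, ω ^ ((i.1+1)*(j.1+1)) * (x 0 i * x 1 j) := by
        rw [coeffForm_apply]
        refine Eq.trans ?_ (Fintype.sum_prod_type' (fun (i : Fin n₁) (j : Fin n₂) =>
          ω ^ ((i.1+1)*(j.1+1)) * (x 0 i * x 1 j)))
        refine Fintype.sum_equiv (piFinTwoEquiv (fun k : Fin 2 => Fin (![n₁, n₂] k))) _ _ fun j => ?_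
        rw [hc']
        rfl
      rw [e]
      refine (aux_bil n n₁ n₂ (le_max_left _ _) (le_max_right _ _) ω hω hn (x 0) (x 1)).trans ?_
      rw [← Real.sqrt_eq_rpow]
      have a0 := aux_lp n₁ h₁ (p 0) (hp 0) (x 0) (hx 0)
      have a1 := aux_lp n₂ h₂ (p 1) (hp 1) (x 1) (hx 1)
      gcongr
end
end

section
/- Let n_1, n_2 be positive integers and p_1, p_2 ∈ [2, ∞]. Then there exists a unimodular bilinear form A : ℓ_{p_1}^{n_1} × ℓ_{p_2}^{n_2} → ℂ (i.e., with all coefficients A(e_i, e_j) of modulus 1) such that ‖A‖ ≤ (n_1^{1/2} + n_2^{1/2}) · n_1^{1/2 − 1/p_1} · n_2^{1/2 − 1/p_2} (with the convention 1/∞ = 0). In other words, in the complex bilinear Kahane–Salem–Zygmund inequality the constant can be taken equal to 1. -/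
open scoped BigOperators ENNReal

noncomputable section

lemma ksz_parseval (N n : ℕ) (hn : n ≤ N) (w : ℂ) (hw : IsPrimitiveRoot w N) (hw1 : ‖w‖ = 1)
    (x : Fin n → ℂ) :
    ∑ j ∈ Finset.range N, ‖∑ i : Fin n, w ^ ((i : ℕ) * j) * x i‖ ^ 2 = N * ∑ i, ‖x i‖ ^ 2 := by
  have hw0 : w ≠ 0 := by intro h; simp [h] at hw1
  have hc : (starRingEnd ℂ) w * w = 1 := by
    rw [mul_comm, Complex.mul_conj, Complex.normSq_eq_norm_sq, hw1]; simp
  have orth : ∀ i k : Fin n, ∑ j ∈ Finset.range N,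
      (w ^ (i : ℕ) * (starRingEnd ℂ) w ^ (k : ℕ)) ^ j = if i = k then (N : ℂ) else 0 := by
    intro i k
    split_ifs with h
    · subst h
      rw [← mul_pow, mul_comm w, hc]; simp
    · set z := w ^ (i : ℕ) * (starRingEnd ℂ) w ^ (k : ℕ) with hz
      have hzk : z * w ^ (k : ℕ) = w ^ (i : ℕ) := by
        rw [hz, mul_assoc, ← mul_pow, hc]; simp
      have hz1 : z ≠ 1 := by
        intro h1
        rw [h1, one_mul] at hzk
        have := hw.pow_inj (by omega) (by omega) hzk
        exact h (Fin.ext this.symm)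
      have hzN : z ^ N = 1 := by
        rw [hz, mul_pow, ← pow_mul, ← pow_mul, mul_comm, mul_comm (k : ℕ), mul_comm (i : ℕ),
          pow_mul, pow_mul, ← map_pow, hw.pow_eq_one]; simp
      have := geom_sum_mul z N
      rw [hzN, sub_self] at this
      exact (mul_eq_zero.1 this).resolve_right (sub_ne_zero.2 hz1)
  have key : ∑ j ∈ Finset.range N, (∑ i : Fin n, w ^ ((i : ℕ) * j) * x i) *
      (starRingEnd ℂ) (∑ i : Fin n, w ^ ((i : ℕ) * j) * x i)
      = N * ∑ i, x i * (starRingEnd ℂ) (x i) := by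
    simp only [map_sum, Finset.sum_mul_sum]
    rw [Finset.sum_comm, Finset.mul_sum]
    refine Finset.sum_congr rfl fun i _ => ?_
    rw [Finset.sum_comm]
    have : ∀ k : Fin n, ∑ j ∈ Finset.range N, w ^ ((i : ℕ) * j) * x i *
        (starRingEnd ℂ) (w ^ ((k : ℕ) * j) * x k) =
        (if i = k then (N : ℂ) else 0) * (x i * (starRingEnd ℂ) (x k)) := by
      intro k
      rw [← orth, Finset.sum_mul]
      refine Finset.sum_congr rfl fun j _ => ?_
      simp only [map_mul, map_pow, pow_mul, mul_pow]
      ring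
    simp only [this]; simp
  simp only [Complex.mul_conj, Complex.normSq_eq_norm_sq] at key
  exact_mod_cast key

lemma ksz_l2 (N n m : ℕ) (hn : n ≤ N) (hm : m ≤ N) (w : ℂ) (hw : IsPrimitiveRoot w N)
    (hw1 : ‖w‖ = 1) (x : Fin n → ℂ) (y : Fin m → ℂ) :
    ‖∑ i : Fin n, ∑ j : Fin m, w ^ ((i : ℕ) * (j : ℕ)) * (x i * y j)‖ ≤
      √N * √(∑ i, ‖x i‖ ^ 2) * √(∑ j, ‖y j‖ ^ 2) := by
  have e : ∑ i : Fin n, ∑ j : Fin m, w ^ ((i : ℕ) * (j : ℕ)) * (x i * y j)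
      = ∑ j : Fin m, (∑ i : Fin n, w ^ ((i : ℕ) * (j : ℕ)) * x i) * y j := by
    rw [Finset.sum_comm]
    simp only [Finset.sum_mul, mul_assoc]
  rw [e, ← Real.sqrt_mul (by positivity), ← ksz_parseval N n hn w hw hw1 x]
  calc _ ≤ ∑ j : Fin m, ‖∑ i : Fin n, w ^ ((i : ℕ) * (j : ℕ)) * x i‖ * ‖y j‖ := by
        refine (norm_sum_le _ _).trans (le_of_eq ?_)
        simp
    _ ≤ √(∑ j : Fin m, ‖∑ i : Fin n, w ^ ((i : ℕ) * (j : ℕ)) * x i‖ ^ 2) * √(∑ j, ‖y j‖ ^ 2) :=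
        Real.sum_mul_le_sqrt_mul_sqrt _ _ _
    _ ≤ _ := by
        gcongr
        rw [Fin.sum_univ_eq_sum_range
          (fun j => ‖∑ i : Fin n, w ^ ((i : ℕ) * j) * x i‖ ^ 2)]
        exact Finset.sum_le_sum_of_subset_of_nonneg (by simpa using hm)
          (fun _ _ _ => by positivity)

lemma ksz_lp (p : ℝ≥0∞) (hp : 2 ≤ p) (n : ℕ) (hn : 0 < n) (x : Fin n → ℂ)
    (hx : lpNorm p x ≤ 1) :
    √(∑ i, ‖x i‖ ^ 2) ≤ (n : ℝ) ^ ((1 : ℝ) / 2 - (1 / p).toReal) := by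
  unfold lpNorm at hx
  split_ifs at hx with h
  · subst h
    have hb : ∀ i, ‖x i‖ ≤ 1 := fun i =>
      (le_ciSup (f := fun j => ‖x j‖) (Set.finite_range _).bddAbove i).trans hx
    simp only [one_div, ENNReal.inv_top, ENNReal.toReal_zero, sub_zero]
    rw [← one_div, ← Real.sqrt_eq_rpow]
    apply Real.sqrt_le_sqrt
    calc _ ≤ ∑ i : Fin n, (1 : ℝ) :=
          Finset.sum_le_sum fun i _ => pow_le_one₀ (norm_nonneg _) (hb i)
      _ = n := by simp
  · have hq : 2 ≤ p.toReal := by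
      simpa using ENNReal.toReal_mono h hp
    rw [ENNReal.toReal_div, ENNReal.toReal_one]
    set q := p.toReal
    have hn' : (0 : ℝ) < n := by exact_mod_cast hn
    have hT : 0 ≤ ∑ j, ‖x j‖ ^ q := by positivity
    have h1 : ∑ j, ‖x j‖ ^ q ≤ 1 := by
      by_contra hc
      exact absurd hx (not_le.2 (Real.one_lt_rpow (not_le.1 hc) (by positivity)))
    have h2 := Real.rpow_sum_le_const_mul_sum_rpow (Finset.univ : Finset (Fin n))
      (fun i => ‖x i‖ ^ 2) (p := q / 2) (by linarith)
    have h3 : ∀ i, |‖x i‖ ^ 2| ^ (q / 2) = ‖x i‖ ^ q := by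
      intro i
      rw [abs_of_nonneg (by positivity), ← Real.rpow_natCast, ← Real.rpow_mul (norm_nonneg _)]
      congr 1; push_cast; ring
    have h4 : (∑ i, ‖x i‖ ^ 2) ^ (q / 2) ≤ (n : ℝ) ^ (q / 2 - 1) := by
      simp only [h3, Finset.card_univ, Fintype.card_fin] at h2
      simp only [abs_pow, abs_norm] at h2
      exact h2.trans (mul_le_of_le_one_right (by positivity) h1)
    have h5 := Real.rpow_le_rpow (by positivity) h4 (show 0 ≤ 1 / q by positivity)
    rw [← Real.rpow_mul (by positivity), ← Real.rpow_mul (by positivity)] at h5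
    rw [Real.sqrt_eq_rpow]
    convert h5 using 2 <;> field_simp

lemma ksz_coeffForm_apply {n : Fin 2 → ℕ} (c : (∀ k, Fin (n k)) → ℂ) (f : ℕ → ℕ → ℂ)
    (hc : ∀ j, c j = f (j 0) (j 1)) (x : ∀ k, Fin (n k) → ℂ) :
    coeffForm c x = ∑ i : Fin (n 0), ∑ j : Fin (n 1), f i j * (x 0 i * x 1 j) := by
  rw [← Fintype.sum_prod_type']
  rw [← (piFinTwoEquiv (fun k => Fin (n k))).sum_comp]
  simp [coeffForm, hc, mul_comm]

lemma ksz_general (n : Fin 2 → ℕ) (h : ∀ k, 0 < n k) (p : Fin 2 → ℝ≥0∞) (hp : ∀ k, 2 ≤ p k) :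
    ∃ A : MultilinearMap ℂ (fun k : Fin 2 => Fin (n k) → ℂ) ℂ,
      Unimodular A ∧
        opNorm p A ≤
          ((n 0 : ℝ) ^ ((1 : ℝ) / 2) + (n 1 : ℝ) ^ ((1 : ℝ) / 2))
            * (n 0 : ℝ) ^ ((1 : ℝ) / 2 - (1 / p 0).toReal)
            * (n 1 : ℝ) ^ ((1 : ℝ) / 2 - (1 / p 1).toReal) := by
  set N := max (n 0) (n 1) with hN
  have hN0 : N ≠ 0 := by have := h 0; omega
  have hw := Complex.isPrimitiveRoot_exp N hN0
  set w := Complex.exp (2 * Real.pi * Complex.I / N)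
  have hw1 : ‖w‖ = 1 := hw.norm'_eq_one hN0
  have happ := ksz_coeffForm_apply (n := n) (fun j => w ^ ((j 0 : ℕ) * (j 1 : ℕ)))
    (fun a b => w ^ (a * b)) (fun j => rfl)
  refine ⟨coeffForm (fun j => w ^ ((j 0 : ℕ) * (j 1 : ℕ))), ?_, ?_⟩
  · intro j
    rw [happ, Finset.sum_eq_single (j 0), Finset.sum_eq_single (j 1)]
    · simp [hw1]
    · intro b _ hb; simp [hb]
    · simp
    · intro b _ hb; simp [hb]
    · simp
  · apply Real.sSup_le
    · rintro t ⟨x, hx, rfl⟩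
      rw [happ]
      refine (ksz_l2 N _ _ (le_max_left _ _) (le_max_right _ _) w hw hw1 (x 0) (x 1)).trans ?_
      have hs : √(N : ℝ) ≤ (n 0 : ℝ) ^ ((1 : ℝ) / 2) + (n 1 : ℝ) ^ ((1 : ℝ) / 2) := by
        rw [← Real.sqrt_eq_rpow, ← Real.sqrt_eq_rpow]
        rcases max_choice (n 0) (n 1) with e | e <;> rw [hN, e]
        · exact le_add_of_nonneg_right (Real.sqrt_nonneg _)
        · exact le_add_of_nonneg_left (Real.sqrt_nonneg _)
      have a0 := ksz_lp (p 0) (hp 0) _ (h 0) (x 0) (hx 0)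
      have a1 := ksz_lp (p 1) (hp 1) _ (h 1) (x 1) (hx 1)
      gcongr
    · positivity

/-- **Complex bilinear Kahane–Salem–Zygmund inequality with constant 1.**
For `p₁, p₂ ∈ [2,∞]` there is a unimodular bilinear form
`A : ℓ_{p₁}^{n₁} × ℓ_{p₂}^{n₂} → ℂ` with
`‖A‖ ≤ (n₁^{1/2} + n₂^{1/2}) · n₁^{1/2 − 1/p₁} · n₂^{1/2 − 1/p₂}`. -/
theorem complex_bilinear_ksz_constant_one (n₁ n₂ : ℕ) (h₁ : 0 < n₁) (h₂ : 0 < n₂)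
    (p : Fin 2 → ℝ≥0∞) (hp : ∀ k, 2 ≤ p k) :
    ∃ A : MultilinearMap ℂ (fun k : Fin 2 => Fin (![n₁, n₂] k) → ℂ) ℂ,
      Unimodular A ∧
        opNorm p A ≤
          ((n₁ : ℝ) ^ ((1 : ℝ) / 2) + (n₂ : ℝ) ^ ((1 : ℝ) / 2))
            * (n₁ : ℝ) ^ ((1 : ℝ) / 2 - (1 / p 0).toReal)
            * (n₂ : ℝ) ^ ((1 : ℝ) / 2 - (1 / p 1).toReal) := by
  exact ksz_general ![n₁, n₂] (by intro k; fin_cases k <;> assumption) p hp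
end
end
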